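/- Let $f(z) \in \mathbb{C}_v[z]$ be a monic polynomial of degree $d \geq 2$ over a complete algebraically closed non-archimedean field. Then the filled Julia set $\mathcal{K}_v = \{z \in \mathbb{C}_v : \{f^n(z)\}_{n\geq0} \text{ is bounded}\}$ has capacity $\gamma_v(\mathcal{K}_v) = 1$, i.e., $\log \gamma_v(\mathcal{K}_v) = 0$. -/

import Mathlib

open Finset Filter Polynomial

/-- The `n`-th normalized supremum of geometric means of pairwise distances of points of `E`,
whose limit defines the non-archimedean capacity (transfinite diameter) of `E`. -/
noncomputable def capSeq {Cv : Type*} [NormedField Cv] (E : Set Cv) (n : ℕ) : ℝ :=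
  sSup {x : ℝ | ∃ z : Fin n → Cv, (∀ i, z i ∈ E) ∧
    x = (∏ p ∈ Finset.univ.offDiag, ‖z p.1 - z p.2‖) ^ ((1 : ℝ) / (n * (n - 1) : ℕ))}

section helpers

variable {Cv : Type*} [NormedField Cv]

/-- The filled Julia set. -/
def filledK (f : Polynomial Cv) : Set Cv :=
  {z : Cv | ∃ M : ℝ, ∀ m : ℕ, ‖(fun w => f.eval w)^[m] z‖ ≤ M}

lemma filledK_eval {f : Cv[X]} {z : Cv} (hz : z ∈ filledK f) : f.eval z ∈ filledK f := by
  obtain ⟨M, hM⟩ := hz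
  exact ⟨M, fun m => by simpa [Function.iterate_succ_apply] using hM (m + 1)⟩

lemma filledK_of_eval {f : Cv[X]} {z : Cv} (hz : f.eval z ∈ filledK f) : z ∈ filledK f := by
  obtain ⟨M, hM⟩ := hz
  refine ⟨max M ‖z‖, fun m => ?_⟩
  cases m with
  | zero => simp
  | succ m => exact (by simpa [Function.iterate_succ_apply] using hM m : _ ≤ M).trans (le_max_left _ _)

lemma filledK_of_iterate {f : Cv[X]} (k : ℕ) : ∀ {z : Cv},
    (fun w => f.eval w)^[k] z ∈ filledK f → z ∈ filledK f := by
  induction k with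
  | zero => intro z hz; simpa using hz
  | succ k ih =>
    intro z hz
    rw [Function.iterate_succ_apply] at hz
    exact filledK_of_eval (ih hz)

lemma filledK_bounded {f : Cv[X]} (hd : 2 ≤ f.natDegree) :
    ∃ R : ℝ, 1 ≤ R ∧ ∀ z ∈ filledK f, ‖z‖ ≤ R := by
  have hdeg : 0 < f.divX.degree := by
    rw [← natDegree_pos_iff_degree_pos, natDegree_divX_eq_natDegree_tsub_one]
    omega
  have h1 : Tendsto (fun z : Cv => ‖f.divX.eval z‖) (comap norm atTop) atTop :=
    f.divX.tendsto_norm_atTop hdeg (z := fun z => z) tendsto_comap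
  have h2 := (h1.eventually_ge_atTop 3)
  rw [eventually_comap, eventually_atTop] at h2
  obtain ⟨R₀, hR₀⟩ := h2
  have key : ∀ z : Cv, max 1 (max R₀ ‖f.coeff 0‖) < ‖z‖ → 2 * ‖z‖ ≤ ‖f.eval z‖ := by
    intro z hz
    have hz1 : R₀ ≤ ‖z‖ := le_trans (le_trans (le_max_left _ _) (le_max_right _ _)) hz.le
    have hz2 : ‖f.coeff 0‖ ≤ ‖z‖ := le_trans (le_trans (le_max_right _ _) (le_max_right _ _)) hz.le
    have h3 := hR₀ _ hz1 z rfl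
    have h4 : f.eval z = f.divX.eval z * z + f.coeff 0 := by
      conv_lhs => rw [← f.divX_mul_X_add]
      simp
    have h5 : ‖f.divX.eval z * z‖ ≤ ‖f.eval z‖ + ‖f.coeff 0‖ := by
      rw [h4]
      exact norm_le_add_norm_add _ _
    rw [norm_mul] at h5
    nlinarith [norm_nonneg z]
  refine ⟨max 1 (max R₀ ‖f.coeff 0‖), le_max_left _ _, ?_⟩
  rintro z ⟨M, hM⟩
  by_contra! hlt
  have hpos : 1 < ‖z‖ := lt_of_le_of_lt (le_max_left _ _) hlt
  have hgrow : ∀ m : ℕ, 2 ^ m * ‖z‖ ≤ ‖(fun w => f.eval w)^[m] z‖ := by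
    intro m
    induction m with
    | zero => simp
    | succ m ih =>
      rw [Function.iterate_succ_apply']
      have : ‖z‖ ≤ ‖(fun w => f.eval w)^[m] z‖ :=
        le_trans (le_mul_of_one_le_left (norm_nonneg z) (one_le_pow₀ (by norm_num))) ih
      have := key _ (lt_of_lt_of_le hlt this)
      rw [pow_succ]
      linarith
  obtain ⟨m, hm⟩ := pow_unbounded_of_one_lt M (one_lt_two : (1 : ℝ) < 2)
  have := hgrow m
  have := hM m
  have : (2 : ℝ) ^ m ≤ 2 ^ m * ‖z‖ := le_mul_of_one_le_right (by positivity) hpos.le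
  linarith

lemma filledK_infinite [IsAlgClosed Cv] (hnt : ∃ x : Cv, 1 < ‖x‖) {f : Cv[X]}
    (hd : 2 ≤ f.natDegree) (hmonic : f.Monic) : (filledK f).Infinite := by
  intro hfin
  have hdegX : (f - X).natDegree = f.natDegree :=
    natDegree_sub_eq_left_of_natDegree_lt (by rw [natDegree_X]; omega)
  obtain ⟨x₀, hx₀⟩ := IsAlgClosed.exists_root (f - X) (by
    intro h
    have := natDegree_eq_of_degree_eq_some (n := 0) (by simpa using h)
    omega)
  have hfix : f.eval x₀ = x₀ := by
    simpa [sub_eq_zero] using hx₀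
  have hx₀K : x₀ ∈ filledK f := ⟨‖x₀‖, fun m => by
    rw [Function.iterate_fixed hfix]⟩
  have hmaps : Set.MapsTo (fun w => f.eval w) (filledK f) (filledK f) := fun z hz => filledK_eval hz
  have hsurj : Set.SurjOn (fun w => f.eval w) (filledK f) (filledK f) := by
    intro c hc
    have hdegC : (f - C c).natDegree = f.natDegree := natDegree_sub_C
    obtain ⟨w, hw⟩ := IsAlgClosed.exists_root (f - C c) (by
      intro h
      have := natDegree_eq_of_degree_eq_some (n := 0) (by simpa using h)
      omega)
    have hw' : f.eval w = c := by simpa [sub_eq_zero] using hw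
    exact ⟨w, filledK_of_eval (by rwa [hw']), hw'⟩
  have hinj : Set.InjOn (fun w => f.eval w) (filledK f) := by
    have := hfin.to_subtype
    have h1 : Function.Surjective hmaps.restrict := hmaps.restrict_surjective_iff.2 hsurj
    have h2 := Finite.injective_iff_surjective.2 h1
    exact hmaps.restrict_inj.1 h2
  have hmon : (f - C x₀).Monic := hmonic.sub_of_left (by
    refine lt_of_le_of_lt degree_C_le ?_
    rw [← natDegree_pos_iff_degree_pos]; omega)
  have hroots : ∀ w ∈ (f - C x₀).roots, w = x₀ := by
    intro w hw
    have hw' : f.eval w = x₀ := by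
      have := (mem_roots'.1 hw).2
      simpa [sub_eq_zero] using this
    exact hinj (filledK_of_eval (by rwa [hw'])) hx₀K (by simp [hw', hfix])
  have hev : ∀ z, f.eval z - x₀ = (z - x₀) ^ Multiset.card (f - C x₀).roots := by
    intro z
    have := (IsAlgClosed.splits (f - C x₀)).eval_eq_prod_roots_of_monic hmon z
    rw [Multiset.eq_replicate_card.2 hroots] at this
    simpa using this
  have hball : ∀ z, ‖z - x₀‖ ≤ 1 → z ∈ filledK f := by
    intro z hz
    have : ∀ m : ℕ, ‖(fun w => f.eval w)^[m] z - x₀‖ ≤ 1 := by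
      intro m
      induction m with
      | zero => simpa using hz
      | succ m ih =>
        rw [Function.iterate_succ_apply', hev, norm_pow]
        exact pow_le_one₀ (norm_nonneg _) ih
    refine ⟨1 + ‖x₀‖, fun m => ?_⟩
    have h1 := this m
    have h2 := norm_le_norm_sub_add ((fun w => f.eval w)^[m] z) x₀
    linarith
  obtain ⟨y, hy⟩ := hnt
  have hy' : ‖y⁻¹‖ < 1 := by rw [norm_inv]; exact inv_lt_one_of_one_lt₀ hy
  have hy0 : 0 < ‖y⁻¹‖ := by rw [norm_inv]; positivity
  refine Set.infinite_of_injective_forall_mem (f := fun n : ℕ => x₀ + y⁻¹ ^ n) ?_ ?_ hfin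
  · intro a b hab
    have : ‖y⁻¹‖ ^ a = ‖y⁻¹‖ ^ b := by
      rw [← norm_pow, ← norm_pow, add_left_cancel hab]
    exact (pow_right_injective₀ hy0 hy'.ne) this
  · intro n
    apply hball
    rw [add_sub_cancel_left, norm_pow]
    exact pow_le_one₀ (norm_nonneg _) hy'.le

lemma exists_sep (s : Finset Cv) : ∃ ε : ℝ, 0 < ε ∧ ∀ a ∈ s, ∀ b ∈ s, a ≠ b → ε ≤ ‖a - b‖ := by
  have h : ∀ᶠ ε : ℝ in nhdsWithin 0 (Set.Ioi 0), ∀ a ∈ s, ∀ b ∈ s, a ≠ b → ε ≤ ‖a - b‖ := by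
    rw [Finset.eventually_all]
    intro a _
    rw [Finset.eventually_all]
    intro b _
    by_cases hab : a = b
    · simp [hab]
    · have : 0 < ‖a - b‖ := norm_pos_iff.2 (sub_ne_zero.2 hab)
      filter_upwards [nhdsWithin_le_nhds (Iio_mem_nhds this)] with ε hε _
      exact le_of_lt hε
  obtain ⟨ε, h1, h2⟩ := (h.and self_mem_nhdsWithin).exists
  exact ⟨ε, h2, h1⟩

lemma iter_monic {f : Cv[X]} (hd : 2 ≤ f.natDegree) (hmonic : f.Monic) (k : ℕ) :
    (f.comp^[k] X).Monic ∧ (f.comp^[k] X).natDegree = f.natDegree ^ k := by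
  induction k with
  | zero => simp [monic_X]
  | succ k ih =>
    rw [Function.iterate_succ_apply']
    refine ⟨hmonic.comp ih.1 ?_, ?_⟩
    · rw [ih.2]; positivity
    · rw [natDegree_comp, ih.2, pow_succ']

lemma lower_step [IsAlgClosed Cv] [IsUltrametricDist Cv] (hnt : ∃ x : Cv, 1 < ‖x‖) {f : Cv[X]}
    (hd : 2 ≤ f.natDegree) (hmonic : f.Monic) {η : ℝ} (h0 : 0 < η) (h1 : η < 1)
    (j : ℕ) (z : ℕ → Cv) :
    ∃ w ∈ filledK f, η ≤ ∏ i ∈ range j, ‖w - z i‖ := by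
  obtain ⟨s, hsK, hcard⟩ := (filledK_infinite hnt hd hmonic).exists_subset_card_eq (j + 1)
  obtain ⟨ε, hε, hsep⟩ := exists_sep s
  obtain ⟨k, hk⟩ : ∃ k : ℕ, η ^ (f.natDegree ^ k) < ε ^ j := by
    obtain ⟨k, hk⟩ := exists_pow_lt_of_lt_one (pow_pos hε j) h1
    exact ⟨k, lt_of_le_of_lt (pow_le_pow_of_le_one h0.le h1.le
      (Nat.lt_pow_self (by omega)).le) hk⟩
  obtain ⟨hPm, hPd⟩ := iter_monic hd hmonic k
  set P := f.comp^[k] X with hP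
  have hPe : ∀ t, P.eval t = (fun w => f.eval w)^[k] t := fun t => by
    rw [hP, iterate_comp_eval]; simp
  obtain ⟨c, hc, hcz⟩ : ∃ c ∈ s, ∀ i ∈ range j, ε ≤ ‖P.eval (z i) - c‖ := by
    by_contra! hcon
    choose! g hg hg' using hcon
    obtain ⟨a, ha, b, hb, hab, hgab⟩ := Finset.exists_ne_map_eq_of_card_lt_of_maps_to
      (s := s) (t := range j) (f := g) (by simp [hcard]) hg
    have h3 := hsep a ha b hb hab
    have h4 := hg' a ha
    have h5 := hg' b hb
    rw [← hgab] at h5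
    have h6 : a - b = (P.eval (z (g a)) - b) - (P.eval (z (g a)) - a) := by ring
    have h7 : ‖a - b‖ ≤ max ‖P.eval (z (g a)) - b‖ ‖P.eval (z (g a)) - a‖ := by
      rw [h6, sub_eq_add_neg, ← norm_neg (P.eval (z (g a)) - a)]
      exact IsUltrametricDist.norm_add_le_max _ _
    exact absurd (h3.trans h7) (not_le.2 (max_lt h5 h4))
  have hdegP : 0 < P.natDegree := by rw [hPd]; positivity
  have hQm : (P - C c).Monic := hPm.sub_of_left (by
    refine lt_of_le_of_lt degree_C_le ?_
    rwa [← natDegree_pos_iff_degree_pos])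
  have hsplit := IsAlgClosed.splits (P - C c)
  have hcardr : Multiset.card (P - C c).roots = f.natDegree ^ k := by
    rw [← hsplit.natDegree_eq_card_roots, natDegree_sub_C, hPd]
  by_contra! hcon
  have hlt : ∀ w ∈ (P - C c).roots, ∏ i ∈ range j, ‖w - z i‖ ≤ η := by
    intro w hw
    refine (hcon w (filledK_of_iterate k ?_)).le
    rw [← hPe]
    have := (mem_roots'.1 hw).2
    have hw' : P.eval w = c := by simpa [sub_eq_zero] using this
    rw [hw']
    exact hsK hc
  have hup : ((P - C c).roots.map fun w => ∏ i ∈ range j, ‖w - z i‖).prod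
      ≤ η ^ (f.natDegree ^ k) := by
    rw [← hcardr]
    refine (Multiset.prod_map_le_prod_map₀ _ (fun _ => η) ?_ hlt).trans (by simp)
    intro w _
    positivity
  have hswap : ((P - C c).roots.map fun w => ∏ i ∈ range j, ‖w - z i‖).prod
      = ∏ i ∈ range j, ‖P.eval (z i) - c‖ := by
    have h3 : ∀ i, ‖P.eval (z i) - c‖ = ((P - C c).roots.map fun w => ‖w - z i‖).prod := by
      intro i
      have := hsplit.eval_eq_prod_roots_of_monic hQm (z i)
      rw [eval_sub, eval_C] at this
      rw [this]
      have h4 := map_multiset_prod (normHom : Cv →*₀ ℝ)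
        ((P - C c).roots.map fun w => z i - w)
      simp only [normHom_apply, Multiset.map_map, Function.comp_def] at h4
      simpa [norm_sub_rev] using h4
    simp_rw [h3, Finset.prod]
    exact Multiset.prod_map_prod_map _ _
  have hlow : ε ^ j ≤ ∏ i ∈ range j, ‖P.eval (z i) - c‖ := by
    calc ε ^ j = ∏ i ∈ range j, ε := by simp
      _ ≤ _ := Finset.prod_le_prod (fun _ _ => hε.le) hcz
  rw [hswap] at hup
  linarith

lemma lower_seq [IsAlgClosed Cv] [IsUltrametricDist Cv] (hnt : ∃ x : Cv, 1 < ‖x‖) {f : Cv[X]}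
    (hd : 2 ≤ f.natDegree) (hmonic : f.Monic) {η : ℝ} (h0 : 0 < η) (h1 : η < 1) (n : ℕ) :
    ∃ z : ℕ → Cv, ∀ j < n, z j ∈ filledK f ∧ η ≤ ∏ i ∈ range j, ‖z j - z i‖ := by
  induction n with
  | zero => exact ⟨0, by simp⟩
  | succ n ih =>
    obtain ⟨z, hz⟩ := ih
    obtain ⟨w, hwK, hw⟩ := lower_step hnt hd hmonic h0 h1 n z
    refine ⟨Function.update z n w, fun j hj => ?_⟩
    have hprod : ∀ a : Cv, ∀ m ≤ n, ∏ i ∈ range m, ‖a - Function.update z n w i‖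
        = ∏ i ∈ range m, ‖a - z i‖ := by
      intro a m hm
      refine Finset.prod_congr rfl fun i hi => ?_
      rw [Function.update_of_ne]
      have := Finset.mem_range.1 hi
      omega
    rw [hprod _ _ (by omega)]
    rcases Nat.lt_succ_iff_lt_or_eq.1 hj with h | rfl
    · rw [Function.update_of_ne h.ne]
      exact hz j h
    · simpa using ⟨hwK, hw⟩

lemma prod_offDiag_eq {n : ℕ} (z : Fin n → Cv) :
    ∏ p ∈ (Finset.univ : Finset (Fin n)).offDiag, ‖z p.1 - z p.2‖
      = (∏ i : Fin n, ∏ j ∈ Ioi i, ‖z j - z i‖) ^ 2 := by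
  have h1 : ∏ p ∈ (Finset.univ : Finset (Fin n)).offDiag, ‖z p.1 - z p.2‖
      = ∏ i : Fin n, ∏ j ∈ univ.filter (fun j => j ≠ i), ‖z j - z i‖ := by
    rw [Finset.prod_sigma']
    refine Finset.prod_bij' (fun p _ => ⟨p.1, p.2⟩) (fun p _ => (p.1, p.2)) ?_ ?_ ?_ ?_ ?_
    · rintro ⟨a, b⟩ h; simpa [eq_comm] using h
    · rintro ⟨a, b⟩ h; simpa [eq_comm] using h
    · simp
    · simp
    · intros; exact norm_sub_rev _ _
  have h2 : ∀ i : Fin n, ∏ j ∈ univ.filter (fun j => j ≠ i), ‖z j - z i‖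
      = (∏ j ∈ Ioi i, ‖z j - z i‖) * ∏ j ∈ Iio i, ‖z j - z i‖ := by
    intro i
    rw [← Finset.prod_union]
    · refine Finset.prod_congr ?_ fun _ _ => rfl
      ext j
      simp only [mem_filter, mem_univ, true_and, mem_union, mem_Ioi, mem_Iio]
      rw [ne_iff_lt_or_gt, or_comm]
    · rw [Finset.disjoint_left]
      intro j hj hj'
      simp at hj hj'
      exact absurd hj (not_lt.2 hj'.le)
  have h3 : ∏ i : Fin n, ∏ j ∈ Iio i, ‖z j - z i‖ = ∏ i : Fin n, ∏ j ∈ Ioi i, ‖z j - z i‖ := by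
    rw [Finset.prod_comm' (t' := univ) (s' := fun j => Ioi j)]
    · exact Finset.prod_congr rfl fun i _ => Finset.prod_congr rfl fun j _ => norm_sub_rev _ _
    · simp
  rw [h1, Finset.prod_congr rfl fun i _ => h2 i, Finset.prod_mul_distrib, h3, sq]

lemma prod_Ioi_eq {n : ℕ} (z : ℕ → Cv) :
    ∏ i : Fin n, ∏ j ∈ Ioi i, ‖z j - z i‖ = ∏ j ∈ range n, ∏ i ∈ range j, ‖z j - z i‖ := by
  rw [Finset.prod_comm' (t' := univ) (s' := fun j => Iio j) (by simp)]
  rw [← Fin.prod_univ_eq_prod_range (fun j => ∏ i ∈ range j, ‖z j - z i‖) n]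
  refine Finset.prod_congr rfl fun j _ => ?_
  have : range (j : ℕ) = (Iio j).map Fin.valEmbedding := by
    rw [Fin.map_valEmbedding_Iio]; ext; simp
  rw [this, Finset.prod_map]
  rfl

lemma upper_poly {f : Cv[X]} (hd : 2 ≤ f.natDegree) (hmonic : f.Monic) {R : ℝ} (hR1 : 1 ≤ R)
    (hR : ∀ z ∈ filledK f, ‖z‖ ≤ R) (n : ℕ) :
    ∃ q : Cv[X], q.Monic ∧ q.natDegree = n ∧ ∀ z ∈ filledK f,
      ‖q.eval z‖ ≤ (R ^ f.natDegree) ^ (Nat.log f.natDegree n + 1) := by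
  have hpow : ∀ m < f.natDegree, ∀ z ∈ filledK f, ‖z ^ m‖ ≤ R ^ f.natDegree := by
    intro m hm z hz
    rw [norm_pow]
    exact (pow_le_pow_left₀ (norm_nonneg _) (hR z hz) m).trans (pow_le_pow_right₀ hR1 hm.le)
  induction n using Nat.strong_induction_on with
  | _ n ih =>
    by_cases hn : n < f.natDegree
    · refine ⟨X ^ n, monic_X_pow n, natDegree_X_pow n, fun z hz => ?_⟩
      rw [Nat.log_of_lt hn]
      simpa using hpow n hn z hz
    · push Not at hn
      obtain ⟨q, hqm, hqd, hq⟩ := ih (n / f.natDegree) (Nat.div_lt_self (by omega) (by omega))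
      have hc : (q.comp f).Monic := hqm.comp hmonic (by omega)
      refine ⟨q.comp f * X ^ (n % f.natDegree), hc.mul (monic_X_pow _), ?_, fun z hz => ?_⟩
      · rw [hc.natDegree_mul (monic_X_pow _), natDegree_comp, natDegree_X_pow, hqd]
        exact Nat.div_add_mod' n _
      · rw [eval_mul, eval_comp, norm_mul, eval_pow, eval_X,
          Nat.log_of_one_lt_of_le (by omega) hn, pow_succ _ (_ + 1)]
        have h1 := hq _ (filledK_eval hz)
        have h2 := hpow _ (Nat.mod_lt n (by omega)) z hz
        gcongr

lemma upper_prod [IsUltrametricDist Cv] {f : Cv[X]} (hd : 2 ≤ f.natDegree) (hmonic : f.Monic)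
    {R : ℝ} (hR1 : 1 ≤ R)
    (hR : ∀ z ∈ filledK f, ‖z‖ ≤ R) {n : ℕ} (z : Fin n → Cv) (hz : ∀ i, z i ∈ filledK f) :
    ∏ i : Fin n, ∏ j ∈ Ioi i, ‖z j - z i‖
      ≤ ((R ^ f.natDegree) ^ (Nat.log f.natDegree n + 1)) ^ n := by
  choose q hqm hqd hq using upper_poly hd hmonic hR1 hR
  have h1 : ∏ i : Fin n, ∏ j ∈ Ioi i, ‖z j - z i‖ = ‖(Matrix.vandermonde z).det‖ := by
    rw [Matrix.det_vandermonde]; simp [norm_prod]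
  have hR' : (1 : ℝ) ≤ R ^ f.natDegree := one_le_pow₀ hR1
  rw [h1, Matrix.det_eval_matrixOfPolynomials_eq_det_vandermonde z (fun i => q i)
    (fun i => hqd i) (fun i => hqm i), Matrix.det_apply]
  refine IsUltrametricDist.norm_sum_le_of_forall_le_of_nonneg (by positivity) fun σ _ => ?_
  have hs : ∀ x : Cv, ‖Equiv.Perm.sign σ • x‖ = ‖x‖ := by
    intro x
    rcases Int.units_eq_one_or (Equiv.Perm.sign σ) with h | h <;> simp [h]
  rw [hs, norm_prod]
  calc _ ≤ ∏ i : Fin n, (R ^ f.natDegree) ^ (Nat.log f.natDegree n + 1) := by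
        refine Finset.prod_le_prod (fun _ _ => norm_nonneg _) fun i _ => ?_
        refine (hq i _ (hz _)).trans (pow_le_pow_right₀ hR' ?_)
        exact Nat.add_le_add_right (Nat.log_mono_right i.2.le) 1
    _ = _ := by simp

lemma exp_tendsto (d : ℕ) (hd : 2 ≤ d) {A : ℝ} (hA : 1 ≤ A) :
    Tendsto (fun n : ℕ => (((A ^ (Nat.log d n + 1)) ^ n) ^ 2) ^ ((1 : ℝ) / (n * (n - 1) : ℕ)))
      atTop (nhds 1) := by
  have hA0 : 0 < A := by linarith
  have hlim : Tendsto (fun n : ℕ => (4 / Real.log d) * (Real.log n / n) + 4 * (1 / (n : ℝ)))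
      atTop (nhds 0) := by
    have h1 : Tendsto (fun n : ℕ => Real.log n / n) atTop (nhds 0) :=
      (Real.isLittleO_log_id_atTop.tendsto_div_nhds_zero).comp tendsto_natCast_atTop_atTop
    have h2 : Tendsto (fun n : ℕ => 1 / (n : ℝ)) atTop (nhds 0) := tendsto_one_div_atTop_nhds_zero_nat
    simpa using (h1.const_mul (4 / Real.log d)).add (h2.const_mul 4)
  have hexp : Tendsto (fun n : ℕ => ((Nat.log d n + 1) * n * 2 : ℕ) * ((1 : ℝ) / (n * (n - 1) : ℕ)))
      atTop (nhds 0) := by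
    refine squeeze_zero' (Eventually.of_forall fun n => by positivity) ?_ hlim
    filter_upwards [eventually_ge_atTop 2] with n hn
    have hn' : (2 : ℝ) ≤ n := by exact_mod_cast hn
    have hl := Real.natLog_le_logb n d
    rw [Real.logb] at hl
    have hlog : 0 ≤ Real.log n / Real.log d := le_trans (by positivity) hl
    have e1 : (((Nat.log d n + 1) * n * 2 : ℕ) : ℝ) * ((1 : ℝ) / (n * (n - 1) : ℕ))
        = (Nat.log d n + 1) * (2 / ((n : ℝ) - 1)) := by
      have : ((n : ℝ) - 1) ≠ 0 := by linarith
      have : (n : ℝ) ≠ 0 := by linarith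
      push_cast [Nat.cast_sub (show 1 ≤ n by omega)]
      field_simp
    have e2 : 2 / ((n : ℝ) - 1) ≤ 4 / n := by
      rw [div_le_div_iff₀ (by linarith) (by linarith)]
      linarith
    rw [e1]
    calc _ ≤ (Real.log n / Real.log d + 1) * (4 / n) := by
          refine mul_le_mul (by linarith) e2 ?_ (by linarith)
          exact div_nonneg (by norm_num) (by linarith)
      _ = _ := by ring
  have := (tendsto_const_nhds (x := A)).rpow hexp (Or.inl hA0.ne')
  rw [Real.rpow_zero] at this
  refine this.congr fun n => ?_
  rw [← pow_mul, ← pow_mul, Real.rpow_mul hA0.le, Real.rpow_natCast, mul_assoc]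

end helpers

/-- For a monic polynomial `f` of degree `d ≥ 2` over a complete algebraically closed
non-archimedean field, the filled Julia set
`𝒦_v = {z : the orbit (f^n(z)) is bounded}` has capacity `1`:
the sequence defining `γ_v(𝒦_v)` converges to `1` (i.e. `log γ_v(𝒦_v) = 0`). -/
theorem stmt11 (Cv : Type*) [NormedField Cv] [CompleteSpace Cv] [IsAlgClosed Cv]
    [IsUltrametricDist Cv] (hnt : ∃ x : Cv, 1 < ‖x‖)
    (f : Polynomial Cv) (d : ℕ) (hd : 2 ≤ d) (hdeg : f.natDegree = d) (hmonic : f.Monic) :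
    Tendsto
      (fun n : ℕ =>
        capSeq {z : Cv | ∃ M : ℝ, ∀ m : ℕ, ‖(fun w => f.eval w)^[m] z‖ ≤ M} n)
      atTop (nhds 1) := by
  subst hdeg
  obtain ⟨R, hR1, hR⟩ := filledK_bounded hd
  have hR' : (1 : ℝ) ≤ R ^ f.natDegree := one_le_pow₀ hR1
  change Tendsto (fun n : ℕ => capSeq (filledK f) n) atTop (nhds 1)
  have hub : ∀ n : ℕ, ∀ x ∈ {x : ℝ | ∃ z : Fin n → Cv, (∀ i, z i ∈ filledK f) ∧
      x = (∏ p ∈ Finset.univ.offDiag, ‖z p.1 - z p.2‖) ^ ((1 : ℝ) / (n * (n - 1) : ℕ))},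
      x ≤ (((((R ^ f.natDegree) ^ (Nat.log f.natDegree n + 1)) ^ n) ^ 2) ^
        ((1 : ℝ) / (n * (n - 1) : ℕ))) := by
    rintro n x ⟨z, hz, rfl⟩
    rw [prod_offDiag_eq]
    refine Real.rpow_le_rpow (by positivity) ?_ (by positivity)
    exact pow_le_pow_left₀ (by positivity) (upper_prod hd hmonic hR1 hR z hz) 2
  have hlow : ∀ n : ℕ, 2 ≤ n → 1 ≤ capSeq (filledK f) n := by
    intro n hn
    have hη : ∀ η : ℝ, 0 < η → η < 1 → η ^ 2 ≤ capSeq (filledK f) n := by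
      intro η h0 h1
      obtain ⟨z, hz⟩ := lower_seq hnt hd hmonic h0 h1 n
      have hmem := le_csSup ⟨_, fun x hx => hub n x hx⟩ (a := (∏ p ∈
        (Finset.univ : Finset (Fin n)).offDiag, ‖z p.1 - z p.2‖) ^ ((1 : ℝ) / (n * (n - 1) : ℕ)))
        ⟨fun i => z i, fun i => (hz i i.2).1, rfl⟩
      refine le_trans ?_ hmem
      rw [prod_offDiag_eq (fun i : Fin n => z i), prod_Ioi_eq]
      have h2 : η ^ n ≤ ∏ j ∈ range n, ∏ i ∈ range j, ‖z j - z i‖ := by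
        calc η ^ n = ∏ j ∈ range n, η := by simp
          _ ≤ _ := Finset.prod_le_prod (fun _ _ => h0.le)
            fun j hj => (hz j (Finset.mem_range.1 hj)).2
      have h3 : (η ^ n) ^ 2 ≤ (∏ j ∈ range n, ∏ i ∈ range j, ‖z j - z i‖) ^ 2 :=
        pow_le_pow_left₀ (by positivity) h2 2
      refine le_trans ?_ (Real.rpow_le_rpow (by positivity) h3 (by positivity))
      have h4 : (η ^ n) ^ 2 = (η ^ 2) ^ n := by ring
      rw [h4, ← Real.rpow_natCast (η ^ 2) n, ← Real.rpow_mul (by positivity)]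
      have h5 : (n : ℝ) * ((1 : ℝ) / (n * (n - 1) : ℕ)) ≤ 1 := by
        rw [mul_one_div]
        refine div_le_one_of_le₀ ?_ (by positivity)
        exact_mod_cast Nat.le_mul_of_pos_right n (by omega)
      have h6 := Real.rpow_le_rpow_of_exponent_ge (by positivity : 0 < η ^ 2)
        (pow_le_one₀ h0.le h1.le) h5
      rwa [Real.rpow_one] at h6
    have ht : Tendsto (fun η : ℝ => η ^ 2) (nhdsWithin 1 (Set.Iio 1)) (nhds 1) := by
      have : Tendsto (fun η : ℝ => η ^ 2) (nhds 1) (nhds (1 ^ 2)) := (continuous_pow 2).tendsto 1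
      rw [one_pow] at this
      exact this.mono_left nhdsWithin_le_nhds
    refine le_of_tendsto ht ?_
    filter_upwards [self_mem_nhdsWithin, nhdsWithin_le_nhds (Ioi_mem_nhds zero_lt_one)] with η h1 h0
    exact hη η h0 h1
  have hne : (filledK f).Nonempty := (filledK_infinite hnt hd hmonic).nonempty
  obtain ⟨x₀, hx₀⟩ := hne
  refine tendsto_of_tendsto_of_tendsto_of_le_of_le' tendsto_const_nhds
    (exp_tendsto f.natDegree hd hR') ?_ (Eventually.of_forall fun n => ?_)
  · filter_upwards [eventually_ge_atTop 2] with n hn using hlow n hn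
  · exact csSup_le ⟨_, fun _ => x₀, fun _ => hx₀, rfl⟩ (hub n)
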